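/- Let P_{16,5} = 864A_1³A_2 + 3825A_1B_2² − 770E_6A_3B_2 − 840E_6A_2B_3 + 60E_6A_1B_4 + 21E_6²A_5. Then, as meromorphic functions on ℍ × ℂ^8, P_{16,5} = E4 · Q, where Q = −(27 d_0/128)·(−7110 c_0 c_1⁵ d_0² + 140Δ c_0² c_1³ c_2 − 21Δ c_0 c_1⁵ − 1344Δ c_0² c_1 d_2² − 9648Δ c_0 c_1² d_0 d_3 + 576Δ c_0 c_1 c_2 d_0 d_2 − 6864Δ c_1³ d_0 d_2 + 648Δ c_1² c_3 d_0² + 2160Δ c_1 c_2² d_0² + 448Δ² c_0 c_2 c_3 − 168Δ² c_1² c_3 − 224Δ² c_1 c_2² + 9216Δ² d_0 d_5 − 8448Δ² d_2 d_3) with Δ = c_0³ − 27 d_0²; in particular P_{16,5}/E4 is a polynomial in c_0, c_1, c_2, c_3, d_0, d_2, d_3, d_5. -/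

import Mathlib

noncomputable section

open Complex Finset

namespace E8Jacobi

/-- π as a complex number. -/
def πC : ℂ := Real.pi

/-- The E8 lattice as a subset of ℝ^8. -/
def E8Lattice : Set (Fin 8 → ℝ) :=
  {x | ((∀ i, ∃ n : ℤ, x i = n) ∨ (∀ i, ∃ n : ℤ, x i = n + 1/2)) ∧ ∃ m : ℤ, ∑ i, x i = 2 * m}

/-- Complexification of a real vector. -/
def cv (x : Fin 8 → ℝ) : Fin 8 → ℂ := fun i => (x i : ℂ)

/-- The dot product on ℝ^8. -/
def dotR (x y : Fin 8 → ℝ) : ℝ := ∑ i, x i * y i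

/-- The dot product on ℂ^8. -/
def dotC (z w : Fin 8 → ℂ) : ℂ := ∑ i, z i * w i

/-- The Weyl group W(E8): orthogonal matrices preserving the E8 lattice. -/
def WeylE8 : Set (Matrix (Fin 8) (Fin 8) ℝ) :=
  {M | (∀ x y, dotR (M.mulVec x) (M.mulVec y) = dotR x y) ∧
       (∀ x ∈ E8Lattice, M.mulVec x ∈ E8Lattice) ∧
       (∀ x ∈ E8Lattice, ∃ y ∈ E8Lattice, M.mulVec y = x)}

/-- The complexified (ℂ-linear) action of a real matrix on ℂ^8. -/
def actC (M : Matrix (Fin 8) (Fin 8) ℝ) (z : Fin 8 → ℂ) : Fin 8 → ℂ :=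
  fun i => ∑ j, (M i j : ℂ) * z j

/-- A W(E8)-invariant weak Jacobi form of weight `k` and index `m`. -/
structure IsWeakJacobiFormE8 (k : ℤ) (m : ℕ) (φ : ℂ → (Fin 8 → ℂ) → ℂ) : Prop where
  holo : DifferentiableOn ℂ (fun p : ℂ × (Fin 8 → ℂ) => φ p.1 p.2) {p | 0 < p.1.im}
  weyl_inv : ∀ M ∈ WeylE8, ∀ τ : ℂ, 0 < τ.im → ∀ z, φ τ (actC M z) = φ τ z
  quasi_periodic : ∀ α ∈ E8Lattice, ∀ β ∈ E8Lattice, ∀ τ : ℂ, 0 < τ.im → ∀ z,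
    φ τ (fun i => z i + τ * (α i : ℂ) + (β i : ℂ)) =
      Complex.exp (-(m : ℂ) * πC * I * (τ * dotC (cv α) (cv α) + 2 * dotC z (cv α))) * φ τ z
  modular : ∀ a b c d : ℤ, a * d - b * c = 1 → ∀ τ : ℂ, 0 < τ.im → ∀ z,
    φ (((a : ℂ) * τ + (b : ℂ)) / ((c : ℂ) * τ + (d : ℂ))) (fun i => z i / ((c : ℂ) * τ + (d : ℂ))) =
      ((c : ℂ) * τ + (d : ℂ)) ^ k *
        Complex.exp ((m : ℂ) * πC * I * (c : ℂ) / ((c : ℂ) * τ + (d : ℂ)) * dotC z z) * φ τ z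
  fourier : ∃ co : ℕ → E8Lattice → ℂ, ∀ τ : ℂ, 0 < τ.im → ∀ z,
    φ τ z = ∑' (n : ℕ) (w : E8Lattice), co n w *
      Complex.exp (2 * πC * I * dotC (cv w.1) z) * Complex.exp (2 * πC * I * τ) ^ n

/-- Membership in the ring J^{E8}_{*,*} of W(E8)-invariant weak Jacobi forms:
a finite sum of weak Jacobi forms of various weights and indices. -/
def MemJE8 (φ : ℂ → (Fin 8 → ℂ) → ℂ) : Prop :=
  ∃ (n : ℕ) (k : Fin n → ℤ) (m : Fin n → ℕ) (ψ : Fin n → ℂ → (Fin 8 → ℂ) → ℂ),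
    (∀ i, IsWeakJacobiFormE8 (k i) (m i) (ψ i)) ∧
    ∀ τ : ℂ, 0 < τ.im → ∀ z, φ τ z = ∑ i, ψ i τ z

/-- The nome q = e^{2πiτ}. -/
def qExp (τ : ℂ) : ℂ := Complex.exp (2 * πC * I * τ)

/-- The Eisenstein series E4. -/
def E4 (τ : ℂ) : ℂ :=
  1 + 240 * ∑' n : ℕ+, (n : ℂ) ^ 3 * qExp τ ^ (n : ℕ) / (1 - qExp τ ^ (n : ℕ))

/-- The Eisenstein series E6. -/
def E6 (τ : ℂ) : ℂ :=
  1 - 504 * ∑' n : ℕ+, (n : ℂ) ^ 5 * qExp τ ^ (n : ℕ) / (1 - qExp τ ^ (n : ℕ))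

/-- The modular discriminant Δ. -/
def Dl (τ : ℂ) : ℂ := (E4 τ ^ 3 - E6 τ ^ 2) / 1728

/-- The Dedekind eta function. -/
def etaF (τ : ℂ) : ℂ := Complex.exp (2 * πC * I * τ / 24) * ∏' n : ℕ, (1 - qExp τ ^ (n + 1))

/-- The theta function of the E8 lattice. -/
def Theta (τ : ℂ) (z : Fin 8 → ℂ) : ℂ :=
  ∑' w : E8Lattice, Complex.exp (πC * I * τ * dotC (cv w.1) (cv w.1) + 2 * πC * I * dotC z (cv w.1))

/-- The Jacobi theta function θ1. -/
def th1 (z τ : ℂ) : ℂ :=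
  I * ∑' n : ℤ, (-1 : ℂ) ^ n * Complex.exp (2 * πC * I * z * ((n : ℂ) - 1/2)) *
    Complex.exp (πC * I * τ * ((n : ℂ) - 1/2) ^ 2)

/-- The Jacobi theta function θ2. -/
def th2 (z τ : ℂ) : ℂ :=
  ∑' n : ℤ, Complex.exp (2 * πC * I * z * ((n : ℂ) - 1/2)) *
    Complex.exp (πC * I * τ * ((n : ℂ) - 1/2) ^ 2)

/-- The Jacobi theta function θ3. -/
def th3 (z τ : ℂ) : ℂ :=
  ∑' n : ℤ, Complex.exp (2 * πC * I * z * (n : ℂ)) * Complex.exp (πC * I * τ * (n : ℂ) ^ 2)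

/-- The Jacobi theta function θ4. -/
def th4 (z τ : ℂ) : ℂ :=
  ∑' n : ℤ, (-1 : ℂ) ^ n * Complex.exp (2 * πC * I * z * (n : ℂ)) *
    Complex.exp (πC * I * τ * (n : ℂ) ^ 2)

/-- A1 = Θ(τ,z). -/
def A1 (τ : ℂ) (z : Fin 8 → ℂ) : ℂ := Theta τ z

/-- A_m for m = 2, 3, 5. -/
def AM (m : ℕ) (τ : ℂ) (z : Fin 8 → ℂ) : ℂ :=
  ((m : ℂ) ^ 3 / ((m : ℂ) ^ 3 + 1)) *
    (Theta ((m : ℂ) * τ) (fun i => (m : ℂ) * z i) +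
      ((m : ℂ) ^ 4)⁻¹ * ∑ k ∈ Finset.range m, Theta ((τ + (k : ℂ)) / (m : ℂ)) z)

def A2 : ℂ → (Fin 8 → ℂ) → ℂ := AM 2
def A3 : ℂ → (Fin 8 → ℂ) → ℂ := AM 3
def A5 : ℂ → (Fin 8 → ℂ) → ℂ := AM 5

/-- A4 = Θ(τ,2z). -/
def A4 (τ : ℂ) (z : Fin 8 → ℂ) : ℂ := Theta τ (fun i => 2 * z i)

def ee1 (τ : ℂ) : ℂ := (th3 0 τ ^ 4 + th4 0 τ ^ 4) / 12
def ee2 (τ : ℂ) : ℂ := (th2 0 τ ^ 4 - th4 0 τ ^ 4) / 12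
def ee3 (τ : ℂ) : ℂ := (-th2 0 τ ^ 4 - th3 0 τ ^ 4) / 12
def h0 (τ : ℂ) : ℂ := th3 0 (2*τ) * th3 0 (6*τ) + th2 0 (2*τ) * th2 0 (6*τ)

def B2 (τ : ℂ) (z : Fin 8 → ℂ) : ℂ :=
  (32/5) * (ee1 τ * Theta (2*τ) (fun i => 2 * z i)
    + (1/2^4) * ee3 τ * Theta (τ/2) z + (1/2^4) * ee2 τ * Theta ((τ+1)/2) z)

def B3 (τ : ℂ) (z : Fin 8 → ℂ) : ℂ :=
  (81/80) * (h0 τ ^ 2 * Theta (3*τ) (fun i => 3 * z i)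
    - (1/3^5) * ∑ k ∈ Finset.range 3, h0 ((τ + (k:ℂ))/3) ^ 2 * Theta ((τ + (k:ℂ))/3) z)

def B4 (τ : ℂ) (z : Fin 8 → ℂ) : ℂ :=
  (16/15) * (th4 0 (2*τ) ^ 4 * Theta (4*τ) (fun i => 4 * z i)
    - (1/2^4) * th4 0 (2*τ) ^ 4 * Theta (τ + 1/2) (fun i => 2 * z i)
    - (1/(2^2 * 4^4)) * ∑ k ∈ Finset.range 4, th2 0 ((τ + (k:ℂ))/2) ^ 4 * Theta ((τ + (k:ℂ))/4) z)

def B6 (τ : ℂ) (z : Fin 8 → ℂ) : ℂ :=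
  (9/10) * (h0 τ ^ 2 * Theta (6*τ) (fun i => 6 * z i)
    + (1/2^4) * ∑ k ∈ Finset.range 2, h0 (τ + (k:ℂ)) ^ 2 * Theta ((3*τ + 3*(k:ℂ))/2) (fun i => 3 * z i)
    - (1/(3 * 3^4)) * ∑ k ∈ Finset.range 3, h0 ((τ + (k:ℂ))/3) ^ 2 * Theta ((2*τ + 2*(k:ℂ))/3) (fun i => 2 * z i)
    - (1/(3 * 6^4)) * ∑ k ∈ Finset.range 6, h0 ((τ + (k:ℂ))/3) ^ 2 * Theta ((τ + (k:ℂ))/6) z)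

/-- The nine basic W(E8)-invariant holomorphic Jacobi forms A1,…,A5,B2,…,B6. -/
def nineForms : Fin 9 → ℂ → (Fin 8 → ℂ) → ℂ := ![A1, A2, A3, A4, A5, B2, B3, B4, B6]

/- The basic meromorphic Jacobi forms a_i, b_j (Appendix A of the paper). -/

def a0f (τ : ℂ) (_z : Fin 8 → ℂ) : ℂ := E4 τ / 12

def a2f (τ : ℂ) (z : Fin 8 → ℂ) : ℂ :=
  6 / (E4 τ * Dl τ) * (-(E4 τ) * A2 τ z + A1 τ z ^ 2)

def a3f (τ : ℂ) (z : Fin 8 → ℂ) : ℂ :=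
  1 / (9 * E4 τ ^ 2 * Dl τ ^ 2) *
    (-7 * E4 τ ^ 2 * E6 τ * A3 τ z - 20 * E4 τ ^ 3 * B3 τ z
      - 9 * E4 τ * E6 τ * A1 τ z * A2 τ z + 30 * E4 τ ^ 2 * A1 τ z * B2 τ z
      + 6 * E6 τ * A1 τ z ^ 3)

def a4f (τ : ℂ) (z : Fin 8 → ℂ) : ℂ :=
  1 / (288 * E4 τ ^ 3 * Dl τ ^ 3) *
    (576 * E4 τ ^ 3 * Dl τ * A4 τ z + 32256 * E4 τ ^ 2 * Dl τ * A1 τ z * A3 τ z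
      - 9 * E4 τ ^ 5 * A2 τ z ^ 2 - 30 * E4 τ ^ 3 * E6 τ * A2 τ z * B2 τ z
      - 25 * E4 τ ^ 4 * B2 τ z ^ 2
      + (60 * E4 τ ^ 4 - 12 * E4 τ * E6 τ ^ 2) * A1 τ z ^ 2 * A2 τ z
      + 80 * E4 τ ^ 2 * E6 τ * A1 τ z ^ 2 * B2 τ z
      + (-70 * E4 τ ^ 3 + 6 * E6 τ ^ 2) * A1 τ z ^ 4)

def b0f (τ : ℂ) (_z : Fin 8 → ℂ) : ℂ := E6 τ / 216

def b1f (τ : ℂ) (z : Fin 8 → ℂ) : ℂ := -4 / E4 τ * A1 τ z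

def b2f (τ : ℂ) (z : Fin 8 → ℂ) : ℂ :=
  5 / (6 * E4 τ ^ 2 * Dl τ) * (E4 τ ^ 2 * B2 τ z - E6 τ * A1 τ z ^ 2)

def b3f (τ : ℂ) (z : Fin 8 → ℂ) : ℂ :=
  1 / (108 * E4 τ ^ 3 * Dl τ ^ 2) *
    (-7 * E4 τ ^ 5 * A3 τ z - 20 * E4 τ ^ 3 * E6 τ * B3 τ z
      - 9 * E4 τ ^ 4 * A1 τ z * A2 τ z + 30 * E4 τ ^ 2 * E6 τ * A1 τ z * B2 τ z
      + (16 * E4 τ ^ 3 - 10 * E6 τ ^ 2) * A1 τ z ^ 3)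

def b4f (τ : ℂ) (z : Fin 8 → ℂ) : ℂ :=
  1 / (1728 * E4 τ ^ 4 * Dl τ ^ 3) *
    (-8640 * E4 τ ^ 4 * Dl τ * B4 τ z + 138240 * E4 τ ^ 3 * Dl τ * A1 τ z * B3 τ z
      + 9 * E4 τ ^ 5 * E6 τ * A2 τ z ^ 2 + 30 * E4 τ ^ 6 * A2 τ z * B2 τ z
      + 25 * E4 τ ^ 4 * E6 τ * B2 τ z ^ 2
      - 48 * E4 τ ^ 4 * E6 τ * A1 τ z ^ 2 * A2 τ z
      + (-140 * E4 τ ^ 5 + 60 * E4 τ ^ 2 * E6 τ ^ 2) * A1 τ z ^ 2 * B2 τ z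
      + (74 * E4 τ ^ 3 * E6 τ - 10 * E6 τ ^ 3) * A1 τ z ^ 4)

def b5f (τ : ℂ) (z : Fin 8 → ℂ) : ℂ :=
  1 / (72 * E4 τ ^ 5 * Dl τ ^ 3) *
    (-36288 * E4 τ ^ 4 * Dl τ * A5 τ z - 294 * E4 τ ^ 6 * A2 τ z * A3 τ z
      - 770 * E4 τ ^ 4 * E6 τ * B2 τ z * A3 τ z - 840 * E4 τ ^ 4 * E6 τ * A2 τ z * B3 τ z
      - 2200 * E4 τ ^ 5 * B2 τ z * B3 τ z + 168 * E4 τ ^ 5 * A1 τ z ^ 2 * A3 τ z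
      + 480 * E4 τ ^ 3 * E6 τ * A1 τ z ^ 2 * B3 τ z - 621 * E4 τ ^ 5 * A1 τ z * A2 τ z ^ 2
      + 3525 * E4 τ ^ 4 * A1 τ z * B2 τ z ^ 2 + 1224 * E4 τ ^ 4 * A1 τ z ^ 3 * A2 τ z
      - 240 * E4 τ ^ 2 * E6 τ * A1 τ z ^ 3 * B2 τ z
      + (-456 * E4 τ ^ 3 + 24 * E6 τ ^ 2) * A1 τ z ^ 5)

def b6f (τ : ℂ) (z : Fin 8 → ℂ) : ℂ :=
  1 / (4478976 * E4 τ ^ 6 * Dl τ ^ 5) *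
    (-19906560 * E4 τ ^ 6 * Dl τ ^ 2 * B6 τ z
      - 188116992 * E4 τ ^ 4 * E6 τ * Dl τ ^ 2 * A1 τ z * A5 τ z
      - 5184 * E4 τ ^ 7 * E6 τ * Dl τ * A2 τ z * A4 τ z
      - 8640 * E4 τ ^ 8 * Dl τ * B2 τ z * A4 τ z
      - 103680 * E4 τ ^ 8 * Dl τ * A2 τ z * B4 τ z
      - 172800 * E4 τ ^ 6 * E6 τ * Dl τ * B2 τ z * B4 τ z
      + 12672 * E4 τ ^ 6 * E6 τ * Dl τ * A1 τ z ^ 2 * A4 τ z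
      + 17280 * (5 * E4 τ ^ 7 + 9 * E4 τ ^ 4 * E6 τ ^ 2) * Dl τ * A1 τ z ^ 2 * B4 τ z
      + 112896 * E4 τ ^ 7 * E6 τ * Dl τ * A3 τ z ^ 2
      + 645120 * E4 τ ^ 8 * Dl τ * A3 τ z * B3 τ z
      + 921600 * E4 τ ^ 6 * E6 τ * Dl τ * B3 τ z ^ 2
      - 1717632 * E4 τ ^ 6 * E6 τ * Dl τ * A1 τ z * A2 τ z * A3 τ z
      - 362880 * (4 * E4 τ ^ 7 + 11 * E4 τ ^ 4 * E6 τ ^ 2) * Dl τ * A1 τ z * B2 τ z * A3 τ z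
      + 483840 * (4 * E4 τ ^ 7 - 9 * E4 τ ^ 4 * E6 τ ^ 2) * Dl τ * A1 τ z * A2 τ z * B3 τ z
      - 11404800 * E4 τ ^ 5 * E6 τ * Dl τ * A1 τ z * B2 τ z * B3 τ z
      + 1161216 * E4 τ ^ 5 * E6 τ * Dl τ * A1 τ z ^ 3 * A3 τ z
      - 92160 * (37 * E4 τ ^ 6 - 9 * E4 τ ^ 3 * E6 τ ^ 2) * Dl τ * A1 τ z ^ 3 * B3 τ z
      + (135 * E4 τ ^ 9 * E6 τ + 54 * E4 τ ^ 6 * E6 τ ^ 3) * A2 τ z ^ 3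
      + (405 * E4 τ ^ 10 + 540 * E4 τ ^ 7 * E6 τ ^ 2) * A2 τ z ^ 2 * B2 τ z
      + 1575 * E4 τ ^ 8 * E6 τ * A2 τ z * B2 τ z ^ 2
      + (375 * E4 τ ^ 9 + 500 * E4 τ ^ 6 * E6 τ ^ 2) * B2 τ z ^ 3
      + (-3159 * E4 τ ^ 8 * E6 τ + 1701 * E4 τ ^ 5 * E6 τ ^ 3) * A1 τ z ^ 2 * A2 τ z ^ 2
      + (-3060 * E4 τ ^ 9 - 1800 * E4 τ ^ 6 * E6 τ ^ 2) * A1 τ z ^ 2 * A2 τ z * B2 τ z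
      + (6975 * E4 τ ^ 7 * E6 τ - 11025 * E4 τ ^ 4 * E6 τ ^ 3) * A1 τ z ^ 2 * B2 τ z ^ 2
      + (6768 * E4 τ ^ 7 * E6 τ - 3024 * E4 τ ^ 4 * E6 τ ^ 3) * A1 τ z ^ 4 * A2 τ z
      + (4260 * E4 τ ^ 8 + 1800 * E4 τ ^ 5 * E6 τ ^ 2 + 180 * E4 τ ^ 2 * E6 τ ^ 4) * A1 τ z ^ 4 * B2 τ z
      + (-3692 * E4 τ ^ 6 * E6 τ + 504 * E4 τ ^ 3 * E6 τ ^ 3 - 12 * E6 τ ^ 5) * A1 τ z ^ 6)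

/-- The Seiberg–Witten coefficients a_0, …, a_4 (a_1 = 0). -/
def aSW : ℕ → ℂ → (Fin 8 → ℂ) → ℂ
  | 0 => a0f
  | 2 => a2f
  | 3 => a3f
  | 4 => a4f
  | _ => fun _ _ => 0

/-- The Seiberg–Witten coefficients b_0, …, b_6. -/
def bSW : ℕ → ℂ → (Fin 8 → ℂ) → ℂ
  | 0 => b0f
  | 1 => b1f
  | 2 => b2f
  | 3 => b3f
  | 4 => b4f
  | 5 => b5f
  | 6 => b6f
  | _ => fun _ _ => 0

/-- The translation parameter −b₁/(6b₀). -/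
def uShift (τ : ℂ) (z : Fin 8 → ℂ) : ℂ := -(bSW 1 τ z) / (6 * bSW 0 τ z)

/-- The coefficients c_i. -/
def cSW (i : ℕ) (τ : ℂ) (z : Fin 8 → ℂ) : ℂ :=
  ∑ j ∈ Finset.range (i+1), aSW j τ z * (Nat.choose (4-j) (4-i) : ℂ) * uShift τ z ^ (i-j)

/-- The coefficients d_j. -/
def dSW (j : ℕ) (τ : ℂ) (z : Fin 8 → ℂ) : ℂ :=
  ∑ l ∈ Finset.range (j+1), bSW l τ z * (Nat.choose (6-l) (6-j) : ℂ) * uShift τ z ^ (j-l)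

/-- Points of the upper half-plane avoiding the zeros of E4, E6 and Δ
(where all the meromorphic Jacobi forms above are defined). -/
def GoodTau (τ : ℂ) : Prop := 0 < τ.im ∧ E4 τ ≠ 0 ∧ E6 τ ≠ 0 ∧ Dl τ ≠ 0

/-- The eleven generators a_0, a_2, a_3, a_4, b_0, …, b_6 of R. -/
def abGens : Fin 11 → ℂ → (Fin 8 → ℂ) → ℂ :=
  ![aSW 0, aSW 2, aSW 3, aSW 4, bSW 0, bSW 1, bSW 2, bSW 3, bSW 4, bSW 5, bSW 6]

/-- The eleven generators c_0, …, c_4, d_0, d_2, …, d_6 of R̃. -/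
def cdGens : Fin 11 → ℂ → (Fin 8 → ℂ) → ℂ :=
  ![cSW 0, cSW 1, cSW 2, cSW 3, cSW 4, dSW 0, dSW 2, dSW 3, dSW 4, dSW 5, dSW 6]

/-- Membership in the polynomial ring R = ℂ[a_0,a_2,a_3,a_4,b_0,…,b_6]
(as meromorphic functions on ℍ × ℂ^8). -/
def MemR (φ : ℂ → (Fin 8 → ℂ) → ℂ) : Prop :=
  ∃ P : MvPolynomial (Fin 11) ℂ, ∀ τ : ℂ, GoodTau τ → ∀ z,
    φ τ z = MvPolynomial.eval (fun i => abGens i τ z) P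

/-- Membership in the polynomial ring R̃ = ℂ[c_0,…,c_4,d_0,d_2,…,d_6]
(as meromorphic functions on ℍ × ℂ^8). -/
def MemRt (φ : ℂ → (Fin 8 → ℂ) → ℂ) : Prop :=
  ∃ P : MvPolynomial (Fin 11) ℂ, ∀ τ : ℂ, GoodTau τ → ∀ z,
    φ τ z = MvPolynomial.eval (fun i => cdGens i τ z) P

/- Invariant theory of binary forms. -/

/-- `BinTrans n T α α'` says that `α'` is the coefficient family of the degree-`n`
binary form with coefficients `α` transformed by `T ∈ SL2(ℂ)`. -/
def BinTrans (n : ℕ) (T : Matrix (Fin 2) (Fin 2) ℂ) (α α' : ℕ → ℂ) : Prop :=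
  ∀ u v : ℂ,
    ∑ j ∈ Finset.range (n+1), α' j * u ^ (n - j) * v ^ j
      = ∑ i ∈ Finset.range (n+1), α i * (T 0 0 * u + T 0 1 * v) ^ (n - i) *
          (T 1 0 * u + T 1 1 * v) ^ i

/-- Variables for polynomials in the coefficients of a binary quartic and sextic. -/
abbrev SV := Fin 5 ⊕ Fin 7

/-- Evaluation of a polynomial in the coefficients of the quartic and sextic. -/
def evalSV (Φ : MvPolynomial SV ℂ) (α β : ℕ → ℂ) : ℂ :=
  MvPolynomial.eval (Sum.elim (fun i : Fin 5 => α i.1) (fun j : Fin 7 => β j.1)) Φ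

/-- Membership in the ring of joint semiinvariants ℂ[V4 ⊕ V6]^{U2(ℂ)}. -/
def IsSemiinvRingElem (Φ : MvPolynomial SV ℂ) : Prop :=
  ∀ κ : ℂ, ∀ α α' β β' : ℕ → ℂ,
    BinTrans 4 !![1, κ; 0, 1] α α' → BinTrans 6 !![1, κ; 0, 1] β β' →
      evalSV Φ α' β' = evalSV Φ α β

/-- Membership in the ring of joint invariants ℂ[V4 ⊕ V6]^{SL2(ℂ)}. -/
def IsInvRingElem (Φ : MvPolynomial SV ℂ) : Prop :=
  ∀ T : Matrix (Fin 2) (Fin 2) ℂ, T.det = 1 → ∀ α α' β β' : ℕ → ℂ,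
    BinTrans 4 T α α' → BinTrans 6 T β β' → evalSV Φ α' β' = evalSV Φ α β

/-- Variables for joint covariants: coefficients of the two forms together with (u,v). -/
abbrev CVV := (Fin 5 ⊕ Fin 7) ⊕ Fin 2

/-- Evaluation of a polynomial in the coefficients and (u,v). -/
def evalCov (Ψ : MvPolynomial CVV ℂ) (α β : ℕ → ℂ) (u v : ℂ) : ℂ :=
  MvPolynomial.eval
    (Sum.elim (Sum.elim (fun i : Fin 5 => α i.1) (fun j : Fin 7 => β j.1))
      (fun p : Fin 2 => if p = 0 then u else v)) Ψ

/-- Membership in the ring of joint covariants ℂ[V4 ⊕ V6 ⊕ ℂ²]^{SL2(ℂ)}. -/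
def IsCovRingElem (Ψ : MvPolynomial CVV ℂ) : Prop :=
  ∀ T : Matrix (Fin 2) (Fin 2) ℂ, T.det = 1 → ∀ α α' β β' : ℕ → ℂ,
    BinTrans 4 T α α' → BinTrans 6 T β β' → ∀ u v : ℂ,
      evalCov Ψ α' β' u v = evalCov Ψ α β (T 0 0 * u + T 0 1 * v) (T 1 0 * u + T 1 1 * v)

/-- â_i in ℂ[α, β, α₀⁻¹]. -/
def ahat (α : ℕ → ℂ) (i : ℕ) : ℂ :=
  ∑ j ∈ Finset.range (i+1), α j * (Nat.choose (4-j) (4-i) : ℂ) * (-(α 1)/(4 * α 0)) ^ (i-j)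

/-- b̂_i in ℂ[α, β, α₀⁻¹]. -/
def bhat (α β : ℕ → ℂ) (i : ℕ) : ℂ :=
  ∑ j ∈ Finset.range (i+1), β j * (Nat.choose (6-j) (6-i) : ℂ) * (-(α 1)/(4 * α 0)) ^ (i-j)

/-- ĉ_i in ℂ[α, β, β₀⁻¹]. -/
def chat (α β : ℕ → ℂ) (i : ℕ) : ℂ :=
  ∑ j ∈ Finset.range (i+1), α j * (Nat.choose (4-j) (4-i) : ℂ) * (-(β 1)/(6 * β 0)) ^ (i-j)

/-- d̂_i in ℂ[α, β, β₀⁻¹]. -/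
def dhat (β : ℕ → ℂ) (i : ℕ) : ℂ :=
  ∑ j ∈ Finset.range (i+1), β j * (Nat.choose (6-j) (6-i) : ℂ) * (-(β 1)/(6 * β 0)) ^ (i-j)

/-- The images of the eleven generators of R under ψ. -/
def hatGens (α β : ℕ → ℂ) : Fin 11 → ℂ :=
  ![ahat α 0, ahat α 2, ahat α 3, ahat α 4, bhat α β 0, bhat α β 1, bhat α β 2,
    bhat α β 3, bhat α β 4, bhat α β 5, bhat α β 6]

/-- The images of the eleven generators of R̃ under ψ̃. -/
def cdhatGens (α β : ℕ → ℂ) : Fin 11 → ℂ :=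
  ![chat α β 0, chat α β 1, chat α β 2, chat α β 3, chat α β 4, dhat β 0, dhat β 2,
    dhat β 3, dhat β 4, dhat β 5, dhat β 6]

/-- Weights picking out the a-variables among the eleven generators. -/
def wA : Fin 11 → ℕ := ![1, 1, 1, 1, 0, 0, 0, 0, 0, 0, 0]

/-- Weights picking out the b-variables among the eleven generators. -/
def wB : Fin 11 → ℕ := ![0, 0, 0, 0, 1, 1, 1, 1, 1, 1, 1]

/-- Weights picking out the α-variables. -/
def wSVα : SV → ℕ := Sum.elim (fun _ => 1) (fun _ => 0)

/-- Weights picking out the β-variables. -/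
def wSVβ : SV → ℕ := Sum.elim (fun _ => 0) (fun _ => 1)

/-- A joint semiinvariant of the quartic and sextic, of degrees (da, db) and order ω. -/
def IsSemiinvOf (Φ : MvPolynomial SV ℂ) (da db : ℕ) (ω : ℤ) : Prop :=
  MvPolynomial.IsWeightedHomogeneous wSVα Φ da ∧
  MvPolynomial.IsWeightedHomogeneous wSVβ Φ db ∧
  IsSemiinvRingElem Φ ∧
  ∀ l : ℂ, l ≠ 0 → ∀ α α' β β' : ℕ → ℂ,
    BinTrans 4 !![l, 0; 0, l⁻¹] α α' → BinTrans 6 !![l, 0; 0, l⁻¹] β β' →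
      evalSV Φ α' β' = l ^ ω * evalSV Φ α β

/-- Substitution α_i ↦ a_i (with a_1 = 0), β_j ↦ b_j into a polynomial in (α, β). -/
def subAB (Φ : MvPolynomial SV ℂ) : ℂ → (Fin 8 → ℂ) → ℂ :=
  fun τ z => MvPolynomial.eval
    (Sum.elim (fun i : Fin 5 => aSW i.1 τ z) (fun j : Fin 7 => bSW j.1 τ z)) Φ

/-- The graph of the map ψ_J : a Jacobi form φ = Q(a_i, b_j) is sent to the
polynomial Φ = Q(â_i, b̂_j). -/
def PsiJRel (φ : ℂ → (Fin 8 → ℂ) → ℂ) (Φ : MvPolynomial SV ℂ) : Prop :=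
  ∃ Q : MvPolynomial (Fin 11) ℂ,
    (∀ τ : ℂ, GoodTau τ → ∀ z, φ τ z = MvPolynomial.eval (fun i => abGens i τ z) Q) ∧
    (∀ α β : ℕ → ℂ, α 0 ≠ 0 → evalSV Φ α β = MvPolynomial.eval (hatGens α β) Q)

/-- The holomorphic Jacobi form P_{16,5} of weight 16 and index 5. -/
def P165 (τ : ℂ) (z : Fin 8 → ℂ) : ℂ :=
  864 * A1 τ z ^ 3 * A2 τ z + 3825 * A1 τ z * B2 τ z ^ 2
    - 770 * E6 τ * A3 τ z * B2 τ z - 840 * E6 τ * A2 τ z * B3 τ z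
    + 60 * E6 τ * A1 τ z * B4 τ z + 21 * E6 τ ^ 2 * A5 τ z

/-- The explicit polynomial expression of P_{16,5}/E4 in the c_i, d_j. -/
def Qcd (τ : ℂ) (z : Fin 8 → ℂ) : ℂ :=
  -(27 * dSW 0 τ z / 128) *
    (-7110 * cSW 0 τ z * cSW 1 τ z ^ 5 * dSW 0 τ z ^ 2
      + 140 * (cSW 0 τ z ^ 3 - 27 * dSW 0 τ z ^ 2) * cSW 0 τ z ^ 2 * cSW 1 τ z ^ 3 * cSW 2 τ z
      - 21 * (cSW 0 τ z ^ 3 - 27 * dSW 0 τ z ^ 2) * cSW 0 τ z * cSW 1 τ z ^ 5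
      - 1344 * (cSW 0 τ z ^ 3 - 27 * dSW 0 τ z ^ 2) * cSW 0 τ z ^ 2 * cSW 1 τ z * dSW 2 τ z ^ 2
      - 9648 * (cSW 0 τ z ^ 3 - 27 * dSW 0 τ z ^ 2) * cSW 0 τ z * cSW 1 τ z ^ 2 * dSW 0 τ z * dSW 3 τ z
      + 576 * (cSW 0 τ z ^ 3 - 27 * dSW 0 τ z ^ 2) * cSW 0 τ z * cSW 1 τ z * cSW 2 τ z * dSW 0 τ z * dSW 2 τ z
      - 6864 * (cSW 0 τ z ^ 3 - 27 * dSW 0 τ z ^ 2) * cSW 1 τ z ^ 3 * dSW 0 τ z * dSW 2 τ z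
      + 648 * (cSW 0 τ z ^ 3 - 27 * dSW 0 τ z ^ 2) * cSW 1 τ z ^ 2 * cSW 3 τ z * dSW 0 τ z ^ 2
      + 2160 * (cSW 0 τ z ^ 3 - 27 * dSW 0 τ z ^ 2) * cSW 1 τ z * cSW 2 τ z ^ 2 * dSW 0 τ z ^ 2
      + 448 * (cSW 0 τ z ^ 3 - 27 * dSW 0 τ z ^ 2) ^ 2 * cSW 0 τ z * cSW 2 τ z * cSW 3 τ z
      - 168 * (cSW 0 τ z ^ 3 - 27 * dSW 0 τ z ^ 2) ^ 2 * cSW 1 τ z ^ 2 * cSW 3 τ z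
      - 224 * (cSW 0 τ z ^ 3 - 27 * dSW 0 τ z ^ 2) ^ 2 * cSW 1 τ z * cSW 2 τ z ^ 2
      + 9216 * (cSW 0 τ z ^ 3 - 27 * dSW 0 τ z ^ 2) ^ 2 * dSW 0 τ z * dSW 5 τ z
      - 8448 * (cSW 0 τ z ^ 3 - 27 * dSW 0 τ z ^ 2) ^ 2 * dSW 2 τ z * dSW 3 τ z)

/-- The polynomial in `c_0, c_1, c_2, c_3, d_0, d_2, d_3, d_5` whose value is `Qcd`. -/
def QcdPoly : MvPolynomial (Fin 8) ℂ :=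
  let c0 := MvPolynomial.X 0
  let c1 := MvPolynomial.X 1
  let c2 := MvPolynomial.X 2
  let c3 := MvPolynomial.X 3
  let d0 := MvPolynomial.X 4
  let d2 := MvPolynomial.X 5
  let d3 := MvPolynomial.X 6
  let d5 := MvPolynomial.X 7
  let δ := c0 ^ 3 - 27 * d0 ^ 2
  MvPolynomial.C (-(27 / 128)) * d0 *
    (-7110 * c0 * c1 ^ 5 * d0 ^ 2 + 140 * δ * c0 ^ 2 * c1 ^ 3 * c2 - 21 * δ * c0 * c1 ^ 5
      - 1344 * δ * c0 ^ 2 * c1 * d2 ^ 2 - 9648 * δ * c0 * c1 ^ 2 * d0 * d3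
      + 576 * δ * c0 * c1 * c2 * d0 * d2 - 6864 * δ * c1 ^ 3 * d0 * d2
      + 648 * δ * c1 ^ 2 * c3 * d0 ^ 2 + 2160 * δ * c1 * c2 ^ 2 * d0 ^ 2
      + 448 * δ ^ 2 * c0 * c2 * c3 - 168 * δ ^ 2 * c1 ^ 2 * c3 - 224 * δ ^ 2 * c1 * c2 ^ 2
      + 9216 * δ ^ 2 * d0 * d5 - 8448 * δ ^ 2 * d2 * d3)

lemma eval_QcdPoly (τ : ℂ) (z : Fin 8 → ℂ) :
    MvPolynomial.eval
      (fun i => ![cSW 0, cSW 1, cSW 2, cSW 3, dSW 0, dSW 2, dSW 3, dSW 5] i τ z) QcdPoly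
      = Qcd τ z := by
  simp only [QcdPoly, Qcd, map_mul, map_add, map_sub, map_neg, map_pow, map_ofNat,
    MvPolynomial.eval_X, MvPolynomial.eval_C, Matrix.cons_val]
  ring

lemma A1_eq_uShift {τ : ℂ} (hτ : GoodTau τ) (z : Fin 8 → ℂ) :
    A1 τ z = uShift τ z * E4 τ * E6 τ / 144 := by
  obtain ⟨-, h4, h6, -⟩ := hτ
  simp only [uShift, bSW, b0f, b1f]
  field_simp
  ring

lemma cSW_zero (τ : ℂ) (z : Fin 8 → ℂ) : cSW 0 τ z = E4 τ / 12 := by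
  simp [cSW, aSW, a0f]

lemma dSW_zero (τ : ℂ) (z : Fin 8 → ℂ) : dSW 0 τ z = E6 τ / 216 := by
  simp [dSW, bSW, b0f]

lemma cSW_one (τ : ℂ) (z : Fin 8 → ℂ) : cSW 1 τ z = E4 τ * uShift τ z / 3 := by
  simp [cSW, aSW, a0f, sum_range_succ]
  ring

lemma cSW_two {τ : ℂ} (hτ : GoodTau τ) (z : Fin 8 → ℂ) :
    cSW 2 τ z = (-6 * A2 τ z + E4 τ ^ 4 * uShift τ z ^ 2 / 3456) / Dl τ := by
  have h := A1_eq_uShift hτ z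
  obtain ⟨-, h4, h6, hD⟩ := hτ
  simp only [cSW, sum_range_succ, range_zero, sum_empty, aSW, a0f, a2f, h]
  simp [Nat.choose]
  field_simp
  simp only [Dl]
  ring

lemma cSW_three {τ : ℂ} (hτ : GoodTau τ) (z : Fin 8 → ℂ) :
    cSW 3 τ z = (-(7 / 9) * E6 τ * A3 τ z - 20 / 9 * E4 τ * B3 τ z
      + 5 / 216 * uShift τ z * E4 τ * E6 τ * B2 τ z - uShift τ z * E4 τ ^ 3 * A2 τ z / 144
      + uShift τ z ^ 3 * E4 τ ^ 4 * (E4 τ ^ 3 - 864 * Dl τ) / 4478976) / Dl τ ^ 2 := by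
  have h := A1_eq_uShift hτ z
  obtain ⟨-, h4, h6, hD⟩ := hτ
  simp only [cSW, sum_range_succ, range_zero, sum_empty, aSW, a0f, a2f, a3f, h]
  simp
  field_simp
  simp only [Dl]
  ring

lemma dSW_two {τ : ℂ} (hτ : GoodTau τ) (z : Fin 8 → ℂ) :
    dSW 2 τ z = (5 / 6 * B2 τ z - 5 / 124416 * E4 τ ^ 3 * E6 τ * uShift τ z ^ 2) / Dl τ := by
  have h := A1_eq_uShift hτ z
  obtain ⟨-, h4, h6, hD⟩ := hτ
  simp only [dSW, sum_range_succ, range_zero, sum_empty, bSW, b0f, b1f, b2f, h]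
  simp [Nat.choose]
  field_simp
  simp only [Dl]
  ring

lemma dSW_three {τ : ℂ} (hτ : GoodTau τ) (z : Fin 8 → ℂ) :
    dSW 3 τ z = (-(7 / 108) * E4 τ ^ 2 * A3 τ z - 5 / 27 * E6 τ * B3 τ z
      + 5 / 2592 * uShift τ z * E4 τ ^ 3 * B2 τ z - uShift τ z * E4 τ ^ 2 * E6 τ * A2 τ z / 1728
      + uShift τ z ^ 3 * E4 τ ^ 3 * E6 τ * (E4 τ ^ 3 - 7488 * Dl τ) / 53747712) / Dl τ ^ 2 := by
  have h := A1_eq_uShift hτ z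
  obtain ⟨-, h4, h6, hD⟩ := hτ
  simp only [dSW, sum_range_succ, range_zero, sum_empty, bSW, b0f, b1f, b2f, b3f, h]
  simp [Nat.choose]
  field_simp
  simp only [Dl]
  ring

lemma dSW_five {τ : ℂ} (hτ : GoodTau τ) (z : Fin 8 → ℂ) :
    dSW 5 τ z = (-504 * Dl τ * A5 τ z - 385 / 36 * E6 τ * A3 τ z * B2 τ z
      - 35 / 3 * E6 τ * A2 τ z * B3 τ z - 275 / 9 * E4 τ * B2 τ z * B3 τ z
      - 49 / 12 * E4 τ ^ 2 * A2 τ z * A3 τ z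
      + uShift τ z * (-10 * E4 τ * Dl τ * B4 τ z + 425 / 1152 * E4 τ * E6 τ * B2 τ z ^ 2
        - 19 / 384 * E4 τ ^ 2 * E6 τ * A2 τ z ^ 2 + 5 / 144 * E4 τ ^ 3 * A2 τ z * B2 τ z)
      + uShift τ z ^ 2 * (5 / 15552 * E4 τ ^ 4 * E6 τ * B3 τ z
        + (7 / 62208 * E4 τ ^ 6 - 7 / 18 * E4 τ ^ 3 * Dl τ) * A3 τ z)
      + uShift τ z ^ 3 * ((5 / 432 * E4 τ ^ 4 * Dl τ - 25 / 4478976 * E4 τ ^ 7) * B2 τ z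
        + E6 τ * (E4 τ ^ 6 / 331776 - E4 τ ^ 3 * Dl τ / 144) * A2 τ z)
      + uShift τ z ^ 5 * E6 τ * (7 / 92876046336 * E4 τ ^ 10 - E4 τ ^ 7 * Dl τ / 5971968))
      / (E4 τ * Dl τ ^ 3) := by
  have h := A1_eq_uShift hτ z
  obtain ⟨-, h4, h6, hD⟩ := hτ
  simp only [dSW, sum_range_succ, range_zero, sum_empty, bSW, b0f, b1f, b2f, b3f, b4f, b5f, h]
  simp
  field_simp
  simp only [Dl]
  ring

lemma cSW_zero_cube_sub_dSW_zero_sq (τ : ℂ) (z : Fin 8 → ℂ) :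
    cSW 0 τ z ^ 3 - 27 * dSW 0 τ z ^ 2 = Dl τ := by
  simp only [cSW_zero, dSW_zero, Dl]
  ring

lemma P165_eq_E4_mul_Qcd {τ : ℂ} (hτ : GoodTau τ) (z : Fin 8 → ℂ) :
    P165 τ z = E4 τ * Qcd τ z := by
  simp only [P165, Qcd, cSW_zero_cube_sub_dSW_zero_sq]
  simp only [A1_eq_uShift hτ, cSW_zero, cSW_one, cSW_two hτ, cSW_three hτ, dSW_zero, dSW_two hτ, dSW_three hτ, dSW_five hτ]
  obtain ⟨-, h4, -, hD⟩ := hτ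
  field_simp
  simp only [Dl]
  ring

/-- P_{16,5} = E4 · Q with Q the explicit polynomial in the c_i, d_j above;
in particular P_{16,5}/E4 is a polynomial in c_0, c_1, c_2, c_3, d_0, d_2, d_3, d_5. -/
theorem P165_div_E4_polynomial :
    (∀ τ : ℂ, GoodTau τ → ∀ z : Fin 8 → ℂ, P165 τ z = E4 τ * Qcd τ z) ∧
    ∃ Q' : MvPolynomial (Fin 8) ℂ, ∀ τ : ℂ, GoodTau τ → ∀ z : Fin 8 → ℂ,
      P165 τ z / E4 τ =
        MvPolynomial.eval
          (fun i => ![cSW 0, cSW 1, cSW 2, cSW 3, dSW 0, dSW 2, dSW 3, dSW 5] i τ z) Q' := by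
  refine ⟨fun τ hτ z => P165_eq_E4_mul_Qcd hτ z, QcdPoly, fun τ hτ z => ?_⟩
  rw [eval_QcdPoly, P165_eq_E4_mul_Qcd hτ, mul_div_cancel_left₀ _ hτ.2.1]

end E8Jacobi
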